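/- There exists a C^∞ shear profile V_s : [0,∞) → ℝ with V_s(0) = 0, V_s'(z) > 0 for all z ≥ 0, and V_s(z) − z converging rapidly (together with all derivatives of V_s − z) to some constant A_s as z → ∞, such that the associated function g is strictly monotone in a neighborhood of each of its positive zeroes and n₊ − n₋ ≠ 0. Consequently, there exist monotone shear flows for which the linearized triple deck model is unstable below analytic regularity. -/

import Mathlib

open MeasureTheory Filter

/-- `HasPV g a L` : the principal value `PV ∫₀^∞ g(u)/(a-u) du` exists and equals `L`. -/
def HasPV (g : ℝ → ℝ) (a L : ℝ) : Prop :=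
  Filter.Tendsto (fun ε : ℝ => ∫ u in {u : ℝ | 0 < u ∧ ε < |u - a|}, g u / (a - u))
    (nhdsWithin 0 (Set.Ioi 0)) (nhds L)

/-- The set whose cardinality is `n₊`: positive zeroes `a` of `g` with
`-1/V_s'(0) + a · PV∫₀^∞ g(u)/(a-u) du > 0` near which `g` is strictly increasing. -/
def Splus (Vs g : ℝ → ℝ) : Set ℝ :=
  {a : ℝ | 0 < a ∧ g a = 0 ∧
    (∃ L : ℝ, HasPV g a L ∧ 0 < -1 / deriv Vs 0 + a * L) ∧
    ∃ ε > (0 : ℝ), StrictMonoOn g (Set.Ioo (a - ε) (a + ε))}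

/-- The set whose cardinality is `n₋`: same but with `g` strictly decreasing near `a`. -/
def Sminus (Vs g : ℝ → ℝ) : Set ℝ :=
  {a : ℝ | 0 < a ∧ g a = 0 ∧
    (∃ L : ℝ, HasPV g a L ∧ 0 < -1 / deriv Vs 0 + a * L) ∧
    ∃ ε > (0 : ℝ), StrictAntiOn g (Set.Ioo (a - ε) (a + ε))}

/-! The profile is built from its slope defect `ρ`, regarded as a function of the velocity: let
`V(0) = 0` and `V' = 1 / (1 - ρ(V))`. Then `V'' / V'³ = ρ'(V)`, so the function `g` attached to `V`
is `ρ'`, and the decay of `ρ` passes to `V - id`, because differentiating `F(V) (V')ᵏ` gives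
`F'(V) (V')ᵏ⁺¹ + k (F ρ')(V) (V')ᵏ⁺²`. For a Gaussian bump `ρ` centred at `a`, the
quotient `ρ'(u) / (a - u)` is `ρ(u)` itself: the principal value at the only zero `a` of `g` is the
integral of `ρ` over the half-line, and `g` decreases through that zero. So `n₊ = 0`, and `n₋ = 1`
as soon as `a` is large enough. -/

open Asymptotics Set Topology
open scoped ContDiff

/-! ### Decay faster than every power -/

theorem superpolynomialDecay_comp_of_linear_le {F V : ℝ → ℝ}
    (hF : SuperpolynomialDecay atTop id F) {m : ℝ} (hm : 0 < m)
    (hV : ∀ᶠ z in atTop, m * z ≤ V z) :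
    SuperpolynomialDecay atTop id fun z => F (V z) := by
  have hV_atTop : Tendsto V atTop atTop :=
    tendsto_atTop_mono' atTop hV (tendsto_id.const_mul_atTop hm)
  intro p
  have hbound : Tendsto (fun z => (m ^ p)⁻¹ * |V z ^ p * F (V z)|) atTop (𝓝 0) := by
    simpa using! (((hF p).comp hV_atTop).abs).const_mul (m ^ p)⁻¹
  refine squeeze_zero_norm' ?_ hbound
  filter_upwards [hV, eventually_ge_atTop 0] with z hVz hz
  rw [id, Real.norm_eq_abs, inv_mul_eq_div, le_div_iff₀' (by positivity), abs_mul, abs_mul,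
    abs_pow, abs_pow, ← mul_assoc, ← mul_pow, abs_of_nonneg hz]
  gcongr
  exact hVz.trans (le_abs_self _)

theorem integrableOn_Ici_of_superpolynomialDecay {f : ℝ → ℝ} (hf : Continuous f)
    (hdecay : SuperpolynomialDecay atTop id f) (a : ℝ) : IntegrableOn f (Ici a) := by
  refine (hf.locallyIntegrable.locallyIntegrableOn _).integrableOn_of_isBigO_atTop
    (g := fun x => x ^ (-2 : ℝ)) ?_ (integrableAtFilter_rpow_atTop_iff.2 (by norm_num))
  simpa [Real.rpow_neg_ofNat] using (superpolynomialDecay_iff_isBigO f tendsto_id).1 hdecay (-2)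

theorem superpolynomialDecay_of_hasDerivAt {f f' : ℝ → ℝ} (hderiv : ∀ x, HasDerivAt f (f' x) x)
    (hf' : SuperpolynomialDecay atTop id f') (hf : Tendsto f atTop (𝓝 0)) :
    SuperpolynomialDecay atTop id f := by
  rintro (_ | p)
  · simpa using hf
  have hpow_deriv : ∀ᶠ x : ℝ in atTop, HasDerivAt (fun x : ℝ => (x ^ (p + 1))⁻¹)
      (-((p + 1 : ℕ) * x ^ p) / (x ^ (p + 1)) ^ 2) x := by
    filter_upwards [eventually_ne_atTop 0] with x hx
    exact (hasDerivAt_pow (p + 1) x).inv (pow_ne_zero _ hx)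
  have hpow_deriv_ne : ∀ᶠ x : ℝ in atTop, -((p + 1 : ℕ) * x ^ p) / (x ^ (p + 1)) ^ 2 ≠ 0 := by
    filter_upwards [eventually_gt_atTop 0] with x hx
    exact div_ne_zero (neg_ne_zero.2 (by positivity)) (by positivity)
  have hratio : Tendsto (fun x => f' x / (-((p + 1 : ℕ) * x ^ p) / (x ^ (p + 1)) ^ 2))
      atTop (𝓝 0) := by
    refine ((hf'.const_mul (-((p + 1 : ℕ) : ℝ)⁻¹)) (p + 2)).congr' ?_
    filter_upwards [eventually_ne_atTop 0] with x hx
    simp only [id]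
    field_simp
    ring
  refine (HasDerivAt.lhopital_zero_atTop (Eventually.of_forall hderiv) hpow_deriv hpow_deriv_ne hf
    (tendsto_inv_atTop_zero.comp (tendsto_pow_atTop p.succ_ne_zero)) hratio).congr fun x => ?_
  rw [div_inv_eq_mul, mul_comm, id]

theorem exists_superpolynomialDecay_sub_const {f f' : ℝ → ℝ}
    (hderiv : ∀ x, HasDerivAt f (f' x) x) (hcont : Continuous f')
    (hf' : SuperpolynomialDecay atTop id f') :
    ∃ A, SuperpolynomialDecay atTop id fun x => f x - A := by
  have hlim : Tendsto f atTop (𝓝 (limUnder atTop f)) :=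
    tendsto_limUnder_of_hasDerivAt_of_integrableOn_Ioi (a := 0) (fun x _ => hderiv x)
      ((integrableOn_Ici_of_superpolynomialDecay hcont hf' 0).mono_set Ioi_subset_Ici_self)
  exact ⟨limUnder atTop f, superpolynomialDecay_of_hasDerivAt
    (fun x => (hderiv x).sub_const _) hf' (tendsto_sub_nhds_zero_iff.2 hlim)⟩

/-- The functions that play the role of Schwartz functions at `+∞`: smooth, and decaying there
faster than every power together with all their derivatives. Nothing is required at `-∞`. -/
structure RapidlyDecreasing (f : ℝ → ℝ) : Prop where
  contDiff : ContDiff ℝ ∞ f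
  decay (n : ℕ) : SuperpolynomialDecay atTop id (iteratedDeriv n f)

namespace RapidlyDecreasing

variable {f g : ℝ → ℝ}

theorem superpolynomialDecay (hf : RapidlyDecreasing f) : SuperpolynomialDecay atTop id f := by
  simpa using hf.decay 0

theorem hasDerivAt (hf : RapidlyDecreasing f) (x : ℝ) : HasDerivAt f (deriv f x) x :=
  (hf.contDiff.differentiable (by simp) x).hasDerivAt

theorem deriv (hf : RapidlyDecreasing f) : RapidlyDecreasing (deriv f) where
  contDiff := (contDiff_infty_iff_deriv.1 hf.contDiff).2
  decay n := by simpa only [← iteratedDeriv_succ'] using hf.decay (n + 1)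

theorem const_mul (hf : RapidlyDecreasing f) (c : ℝ) : RapidlyDecreasing fun x => c * f x where
  contDiff := contDiff_const.mul hf.contDiff
  decay n :=
    ((hf.decay n).const_mul c).congr fun _ => (iteratedDeriv_const_mul_field c f).symm

theorem mul (hf : RapidlyDecreasing f) (hg : RapidlyDecreasing g) :
    RapidlyDecreasing fun x => f x * g x where
  contDiff := hf.contDiff.mul hg.contDiff
  decay n := by
    have leibniz : iteratedDeriv n (fun x => f x * g x) = fun x =>
        ∑ i ∈ Finset.range (n + 1),
          n.choose i * (iteratedDeriv i f * iteratedDeriv (n - i) g) x := by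
      ext x
      rw [iteratedDeriv_fun_mul (hf.contDiff.contDiffAt.of_le (mod_cast le_top))
        (hg.contDiff.contDiffAt.of_le (mod_cast le_top))]
      simp only [Pi.mul_apply, mul_assoc]
    intro p
    simp only [leibniz, Finset.mul_sum]
    rw [← Finset.sum_const_zero (s := Finset.range (n + 1))]
    exact tendsto_finsetSum _ fun i _ => ((hf.decay i).mul (hg.decay (n - i))).const_mul _ p

theorem comp_sub_const (hf : RapidlyDecreasing f) (a : ℝ) :
    RapidlyDecreasing fun x => f (x - a) where
  contDiff := hf.contDiff.comp (contDiff_id.sub contDiff_const)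
  decay n := by
    rw [iteratedDeriv_comp_sub_const]
    exact superpolynomialDecay_comp_of_linear_le (hf.decay n) one_half_pos
      ((eventually_ge_atTop (2 * a)).mono fun x hx => by linarith)

end RapidlyDecreasing

/-! ### Profiles with a prescribed slope defect -/

/-- `V` is the shear profile with slope defect `ρ`: its slope at a point of velocity `u` is
`1 / (1 - ρ u)`. Equivalently `V` inverts `u ↦ ∫₀ᵘ (1 - ρ)`; the equation is imposed on all of `ℝ`,
of which the flow only occupies `[0, ∞)`. -/
structure IsShearProfile (ρ V : ℝ → ℝ) : Prop where
  zero : V 0 = 0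
  hasDerivAt (z : ℝ) : HasDerivAt V (1 - ρ (V z))⁻¹ z

theorem bijective_of_le_deriv {W : ℝ → ℝ} (hW : Differentiable ℝ W) {m : ℝ} (hm : 0 < m)
    (hderiv : ∀ u, m ≤ deriv W u) : Function.Bijective W := by
  have growth := mul_sub_le_image_sub_of_le_deriv hW hderiv
  refine ⟨(strictMono_of_deriv_pos fun u => hm.trans_le (hderiv u)).injective,
    hW.continuous.surjective ?_ ?_⟩
  · refine tendsto_atTop_mono' atTop ?_
      (tendsto_atTop_add_const_right _ (W 0) (tendsto_id.const_mul_atTop hm))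
    filter_upwards [eventually_ge_atTop 0] with u hu
    simpa using! le_sub_iff_add_le.1 (growth hu)
  · refine tendsto_atBot_mono' atBot ?_
      (tendsto_atBot_add_const_right _ (W 0) (tendsto_id.const_mul_atBot hm))
    filter_upwards [eventually_le_atBot 0] with u hu
    have := growth hu
    simp only [id]
    linarith

theorem exists_isShearProfile {ρ : ℝ → ℝ} {c : ℝ} (hρ : Continuous ρ) (hρ_le : ∀ u, ρ u ≤ c)
    (hc : c < 1) : ∃ V, IsShearProfile ρ V := by
  let W : ℝ → ℝ := fun u => ∫ s in (0 : ℝ)..u, (1 - ρ s)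
  have hslope_pos (u : ℝ) : 0 < 1 - ρ u := by linarith [hρ_le u]
  have hW (u : ℝ) : HasDerivAt W (1 - ρ u) u :=
    (continuous_const.sub hρ).integral_hasStrictDerivAt 0 u |>.hasDerivAt
  have hW_bij : Function.Bijective W :=
    bijective_of_le_deriv (fun u => (hW u).differentiableAt) (sub_pos.2 hc) fun u => by
      rw [(hW u).deriv]; linarith [hρ_le u]
  let e : ℝ ≃ₜ ℝ :=
    ((strictMono_of_hasDerivAt_pos hW hslope_pos).orderIsoOfSurjective W hW_bij.2).toHomeomorph
  refine ⟨e.symm, ?_, fun z => ?_⟩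
  · exact e.symm_apply_eq.2 (intervalIntegral.integral_same).symm
  · exact (hW _).of_local_left_inverse e.symm.continuous.continuousAt (hslope_pos _).ne'
      (Eventually.of_forall e.apply_symm_apply)

namespace IsShearProfile

variable {ρ V : ℝ → ℝ} {b c : ℝ}

theorem deriv_eq (hV : IsShearProfile ρ V) (z : ℝ) : deriv V z = (1 - ρ (V z))⁻¹ :=
  (hV.hasDerivAt z).deriv

theorem hasDerivAt_comp (hV : IsShearProfile ρ V) {F : ℝ → ℝ} {F' z : ℝ}
    (hF : HasDerivAt F F' (V z)) : HasDerivAt (fun z => F (V z)) (F' * deriv V z) z := by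
  rw [hV.deriv_eq]
  exact hF.comp z (hV.hasDerivAt z)

theorem deriv_pos (hV : IsShearProfile ρ V) (hρ : ∀ u, ρ u < 1) (z : ℝ) : 0 < deriv V z := by
  rw [hV.deriv_eq]
  exact inv_pos.2 (sub_pos.2 (hρ _))

theorem hasDerivAt_deriv (hV : IsShearProfile ρ V) (hρ : ∀ u, ρ u < 1) {z : ℝ}
    (hdiff : DifferentiableAt ℝ ρ (V z)) :
    HasDerivAt (deriv V) (deriv ρ (V z) * deriv V z ^ 3) z := by
  have hne : 1 - ρ (V z) ≠ 0 := (sub_pos.2 (hρ _)).ne'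
  rw [funext hV.deriv_eq]
  refine (((hV.hasDerivAt_comp hdiff.hasDerivAt).const_sub 1).inv hne).congr_deriv ?_
  rw [hV.deriv_eq]
  field_simp

theorem deriv_defect_comp (hV : IsShearProfile ρ V) (hρ : ∀ u, ρ u < 1) {z : ℝ}
    (hdiff : DifferentiableAt ℝ ρ (V z)) :
    deriv ρ (V z) = deriv (deriv V) z / deriv V z ^ 3 := by
  rw [(hV.hasDerivAt_deriv hρ hdiff).deriv,
    mul_div_cancel_right₀ _ (pow_pos (hV.deriv_pos hρ z) 3).ne']

theorem contDiff (hV : IsShearProfile ρ V) (hρ : ∀ u, ρ u < 1) (hsmooth : ContDiff ℝ ∞ ρ) :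
    ContDiff ℝ ∞ V := by
  refine contDiff_infty.2 fun n => ?_
  induction n with
  | zero =>
    exact contDiff_zero.2 (continuous_iff_continuousAt.2 fun z => (hV.hasDerivAt z).continuousAt)
  | succ n ih =>
    refine (contDiff_succ_iff_deriv (n := n)).2
      ⟨fun z => (hV.hasDerivAt z).differentiableAt, by simp, ?_⟩
    rw [funext hV.deriv_eq]
    exact (contDiff_const.sub ((hsmooth.of_le (mod_cast le_top)).comp ih)).inv
      fun z => (sub_pos.2 (hρ _)).ne'

theorem inv_one_sub_mul_le (hV : IsShearProfile ρ V) (hρ_ge : ∀ u, b ≤ ρ u) (hρ : ∀ u, ρ u < 1)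
    {z : ℝ} (hz : 0 ≤ z) : (1 - b)⁻¹ * z ≤ V z := by
  have hderiv_ge (z : ℝ) : (1 - b)⁻¹ ≤ deriv V z := by
    rw [hV.deriv_eq]
    exact inv_anti₀ (sub_pos.2 (hρ _)) (by linarith [hρ_ge (V z)])
  simpa [hV.zero] using mul_sub_le_image_sub_of_le_deriv
    (fun z => (hV.hasDerivAt z).differentiableAt) hderiv_ge hz

theorem superpolynomialDecay_comp (hV : IsShearProfile ρ V) (hρ_ge : ∀ u, b ≤ ρ u)
    (hρ : ∀ u, ρ u < 1) {F : ℝ → ℝ} (hF : SuperpolynomialDecay atTop id F) :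
    SuperpolynomialDecay atTop id fun z => F (V z) :=
  superpolynomialDecay_comp_of_linear_le hF (inv_pos.2 (sub_pos.2 ((hρ_ge 0).trans_lt (hρ 0))))
    ((eventually_ge_atTop 0).mono fun _ hz => hV.inv_one_sub_mul_le hρ_ge hρ hz)

theorem hasDerivAt_comp_mul_deriv_pow (hV : IsShearProfile ρ V) (hρ : ∀ u, ρ u < 1)
    {F : ℝ → ℝ} {z : ℝ} (hF : DifferentiableAt ℝ F (V z)) (hdiff : DifferentiableAt ℝ ρ (V z))
    (k : ℕ) :
    HasDerivAt (fun z => F (V z) * deriv V z ^ k)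
      (deriv F (V z) * deriv V z ^ (k + 1)
        + k * (F (V z) * deriv ρ (V z)) * deriv V z ^ (k + 2)) z := by
  refine ((hV.hasDerivAt_comp hF.hasDerivAt).mul
    ((hV.hasDerivAt_deriv hρ hdiff).pow k)).congr_deriv ?_
  cases k with
  | zero => simp
  | succ k => simp only [Nat.add_sub_cancel, Pi.pow_apply]; ring

theorem superpolynomialDecay_iteratedDeriv_comp_mul_deriv_pow (hV : IsShearProfile ρ V)
    (hρ_ge : ∀ u, b ≤ ρ u) (hρ_le : ∀ u, ρ u ≤ c) (hc : c < 1) (hρ : RapidlyDecreasing ρ)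
    (n : ℕ) {F : ℝ → ℝ} (hF : RapidlyDecreasing F) (k : ℕ) :
    SuperpolynomialDecay atTop id (iteratedDeriv n fun z => F (V z) * deriv V z ^ k) := by
  have hρ_lt (u : ℝ) : ρ u < 1 := (hρ_le u).trans_lt hc
  induction n generalizing F k with
  | zero =>
    have hdecay := hV.superpolynomialDecay_comp hρ_ge hρ_lt hF.superpolynomialDecay
    refine (hdecay.mul_const ((1 - c)⁻¹ ^ k)).trans_abs_le fun z => ?_
    have hderiv_le : deriv V z ≤ (1 - c)⁻¹ := by
      rw [hV.deriv_eq]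
      exact inv_anti₀ (sub_pos.2 hc) (by linarith [hρ_le (V z)])
    have hderiv_pos : 0 < deriv V z := hV.deriv_pos hρ_lt z
    rw [iteratedDeriv_zero, abs_mul, abs_mul, abs_of_pos (pow_pos hderiv_pos k),
      abs_of_pos (pow_pos (hderiv_pos.trans_le hderiv_le) k)]
    gcongr
  | succ n ih =>
    have hV_smooth : ContDiff ℝ ∞ V := hV.contDiff hρ_lt hρ.contDiff
    have hV'_smooth : ContDiff ℝ ∞ (deriv V) := (contDiff_infty_iff_deriv.1 hV_smooth).2
    have hsmooth {G : ℝ → ℝ} (hG : RapidlyDecreasing G) (j : ℕ) (z : ℝ) :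
        ContDiffAt ℝ n (fun z => G (V z) * deriv V z ^ j) z :=
      ((hG.contDiff.comp hV_smooth).mul (hV'_smooth.pow j)).contDiffAt.of_le (mod_cast le_top)
    have hFρ' : RapidlyDecreasing fun u => k * (F u * deriv ρ u) := (hF.mul hρ.deriv).const_mul k
    have hderiv : deriv (fun z => F (V z) * deriv V z ^ k) = fun z =>
        deriv F (V z) * deriv V z ^ (k + 1)
          + k * (F (V z) * deriv ρ (V z)) * deriv V z ^ (k + 2) :=
      funext fun z => (hV.hasDerivAt_comp_mul_deriv_pow hρ_lt
        (hF.hasDerivAt _).differentiableAt (hρ.hasDerivAt _).differentiableAt k).deriv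
    rw [iteratedDeriv_succ', hderiv]
    refine ((ih hF.deriv (k + 1)).add (ih hFρ' (k + 2))).congr fun z => ?_
    exact (iteratedDeriv_fun_add (hsmooth hF.deriv (k + 1) z) (hsmooth hFρ' (k + 2) z)).symm

theorem hasDerivAt_sub_id (hV : IsShearProfile ρ V) (hρ : ∀ u, ρ u < 1) (z : ℝ) :
    HasDerivAt (fun w => V w - w) (ρ (V z) * deriv V z) z := by
  have hne : 1 - ρ (V z) ≠ 0 := (sub_pos.2 (hρ _)).ne'
  refine ((hV.hasDerivAt z).sub (hasDerivAt_id z)).congr_deriv ?_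
  rw [hV.deriv_eq]
  field_simp
  ring

theorem superpolynomialDecay_iteratedDeriv_sub_id (hV : IsShearProfile ρ V)
    (hρ_ge : ∀ u, b ≤ ρ u) (hρ_le : ∀ u, ρ u ≤ c) (hc : c < 1) (hρ : RapidlyDecreasing ρ)
    {n : ℕ} (hn : 1 ≤ n) :
    SuperpolynomialDecay atTop id (iteratedDeriv n fun w => V w - w) := by
  obtain ⟨n, rfl⟩ := Nat.exists_eq_add_of_le' hn
  rw [iteratedDeriv_succ',
    funext fun z => (hV.hasDerivAt_sub_id (fun u => (hρ_le u).trans_lt hc) z).deriv]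
  simpa only [pow_one] using
    hV.superpolynomialDecay_iteratedDeriv_comp_mul_deriv_pow hρ_ge hρ_le hc hρ n hρ 1

theorem exists_superpolynomialDecay_sub_id_sub_const (hV : IsShearProfile ρ V)
    (hρ_ge : ∀ u, b ≤ ρ u) (hρ_le : ∀ u, ρ u ≤ c) (hc : c < 1) (hρ : RapidlyDecreasing ρ) :
    ∃ A, SuperpolynomialDecay atTop id fun z => V z - z - A := by
  have hρ_lt (u : ℝ) : ρ u < 1 := (hρ_le u).trans_lt hc
  have hV_smooth : ContDiff ℝ ∞ V := hV.contDiff hρ_lt hρ.contDiff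
  have hcont : Continuous fun z => ρ (V z) * deriv V z :=
    (hρ.contDiff.continuous.comp hV_smooth.continuous).mul
      ((contDiff_infty_iff_deriv.1 hV_smooth).2.continuous)
  exact exists_superpolynomialDecay_sub_const (hV.hasDerivAt_sub_id hρ_lt) hcont <| by
    simpa only [iteratedDeriv_zero, pow_one] using
      hV.superpolynomialDecay_iteratedDeriv_comp_mul_deriv_pow hρ_ge hρ_le hc hρ 0 hρ 1

end IsShearProfile

/-! ### Principal values and the sets of critical velocities -/

theorem hasPV_of_eq_sub_mul {f g : ℝ → ℝ} {a : ℝ} (hf : IntegrableOn f (Ioi 0))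
    (hg : ∀ u, g u = (a - u) * f u) : HasPV g a (∫ u in Ioi 0, f u) := by
  have hmeas (ε : ℝ) : MeasurableSet {u : ℝ | ε < |u - a|} :=
    (isOpen_lt continuous_const (by fun_prop)).measurableSet
  have hcover : AECover (volume.restrict (Ioi 0)) (𝓝[>] (0 : ℝ)) fun ε => {u | ε < |u - a|} := by
    refine ⟨ae_restrict_of_ae ?_, hmeas⟩
    filter_upwards [volume.ae_ne a] with u hu
    exact nhdsWithin_le_nhds (Iio_mem_nhds (abs_pos.2 (sub_ne_zero.2 hu)))
  refine (hcover.integral_tendsto_of_countably_generated hf).congr' ?_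
  filter_upwards [self_mem_nhdsWithin] with ε hε
  rw [Measure.restrict_restrict (hmeas ε), inter_comm]
  refine setIntegral_congr_fun (measurableSet_Ioi.inter (hmeas ε)) fun u hu => ?_
  have hne : a - u ≠ 0 := sub_ne_zero.2 fun h => by
    have := (mem_Ioi.1 hε).trans hu.2
    simp [h] at this
  rw [hg, mul_div_cancel_left₀ _ hne]

theorem Splus_eq_empty {V g : ℝ → ℝ} {a δ : ℝ} (hzero : ∀ u, 0 < u → g u = 0 → u = a)
    (hδ : 0 < δ) (hanti : StrictAntiOn g (Ioo (a - δ) (a + δ))) : Splus V g = ∅ := by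
  refine eq_empty_of_forall_notMem ?_
  rintro u ⟨hu, hgu, -, ε, hε, hmono⟩
  obtain rfl := hzero u hu hgu
  obtain ⟨η, hη, hηδε⟩ := exists_between (lt_min hδ hε)
  obtain ⟨hηδ, hηε⟩ := lt_min_iff.1 hηδε
  refine lt_asymm (hmono (a := u) (b := u + η) ?_ ?_ ?_) (hanti (a := u) (b := u + η) ?_ ?_ ?_)
  all_goals first | constructor <;> linarith | linarith

theorem Sminus_eq_singleton {V g : ℝ → ℝ} {a δ L : ℝ} (ha : 0 < a) (hga : g a = 0)
    (hzero : ∀ u, 0 < u → g u = 0 → u = a) (hPV : HasPV g a L)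
    (hL : 0 < -1 / deriv V 0 + a * L) (hδ : 0 < δ)
    (hanti : StrictAntiOn g (Ioo (a - δ) (a + δ))) : Sminus V g = {a} :=
  Subset.antisymm (fun u hu => hzero u hu.1 hu.2.1)
    (singleton_subset_iff.2 ⟨ha, hga, ⟨L, hPV, hL⟩, δ, hδ, hanti⟩)

/-! ### The Gaussian bump -/

theorem superpolynomialDecay_gaussian :
    SuperpolynomialDecay atTop id fun x : ℝ => Real.exp (-(x ^ 2 / 2)) := by
  have hexp : SuperpolynomialDecay atTop id fun x : ℝ => Real.exp (-x) :=
    Real.tendsto_pow_mul_exp_neg_atTop_nhds_zero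
  refine (hexp.const_mul (Real.exp (1 / 2))).trans_abs_le fun x => ?_
  rw [← Real.exp_add, Real.abs_exp, Real.abs_exp, Real.exp_le_exp]
  linarith [sq_nonneg (x - 1)]

theorem rapidlyDecreasing_gaussian : RapidlyDecreasing fun x : ℝ => Real.exp (-(x ^ 2 / 2)) where
  contDiff := by fun_prop
  decay n := by
    refine ((superpolynomialDecay_gaussian.polynomial_mul
      ((Polynomial.hermite n).map (Int.castRingHom ℝ))).const_mul ((-1) ^ n)).congr fun x => ?_
    rw [iteratedDeriv_eq_iterate, Polynomial.deriv_gaussian_eq_hermite_mul_gaussian, mul_assoc,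
      Polynomial.aeval_def, Polynomial.eval₂_eq_eval_map]
    rfl

/-- The slope defect of the unstable flow: a Gaussian centred at the velocity `a`. The height `1/2`
keeps it below `1`, as the slope `1 / (1 - ρ)` requires. -/
noncomputable def gaussianBump (a u : ℝ) : ℝ := 1 / 2 * Real.exp (-((u - a) ^ 2 / 2))

section GaussianBump

variable {a : ℝ}

theorem rapidlyDecreasing_gaussianBump : RapidlyDecreasing (gaussianBump a) :=
  (rapidlyDecreasing_gaussian.comp_sub_const a).const_mul (1 / 2)

theorem gaussianBump_pos (u : ℝ) : 0 < gaussianBump a u := by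
  unfold gaussianBump; positivity

theorem gaussianBump_le_half (u : ℝ) : gaussianBump a u ≤ 1 / 2 := by
  have : Real.exp (-((u - a) ^ 2 / 2)) ≤ 1 :=
    Real.exp_le_one_iff.2 (by linarith [sq_nonneg (u - a)])
  unfold gaussianBump
  linarith

theorem hasDerivAt_gaussianBump (u : ℝ) :
    HasDerivAt (gaussianBump a) ((a - u) * gaussianBump a u) u := by
  have hexponent : HasDerivAt (fun u : ℝ => -((u - a) ^ 2 / 2)) (a - u) u :=
    ((((hasDerivAt_id u).sub_const a).pow 2).div_const 2).neg.congr_deriv (by simp)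
  exact (hexponent.exp.const_mul (1 / 2)).congr_deriv (by unfold gaussianBump; ring)

theorem deriv_gaussianBump (u : ℝ) : deriv (gaussianBump a) u = (a - u) * gaussianBump a u :=
  (hasDerivAt_gaussianBump u).deriv

theorem deriv_gaussianBump_eq_zero_iff {u : ℝ} : deriv (gaussianBump a) u = 0 ↔ u = a := by
  rw [deriv_gaussianBump, mul_eq_zero_iff_right (gaussianBump_pos u).ne', sub_eq_zero, eq_comm]

theorem strictAntiOn_deriv_gaussianBump :
    StrictAntiOn (deriv (gaussianBump a)) (Ioo (a - 1) (a + 1)) := by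
  have hderiv (u : ℝ) : HasDerivAt (deriv (gaussianBump a))
      (((u - a) ^ 2 - 1) * gaussianBump a u) u := by
    rw [funext deriv_gaussianBump]
    exact (((hasDerivAt_id u).const_sub a).mul (hasDerivAt_gaussianBump u)).congr_deriv
      (by simp; ring)
  refine strictAntiOn_of_hasDerivWithinAt_neg (convex_Ioo _ _)
    (fun u _ => (hderiv u).continuousAt.continuousWithinAt)
    (fun u _ => (hderiv u).hasDerivWithinAt) fun u hu => ?_
  rw [interior_Ioo] at hu
  exact mul_neg_of_neg_of_pos (by nlinarith [hu.1, hu.2]) (gaussianBump_pos u)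

theorem integrableOn_gaussianBump (b : ℝ) : IntegrableOn (gaussianBump a) (Ioi b) :=
  (integrableOn_Ici_of_superpolynomialDecay rapidlyDecreasing_gaussianBump.contDiff.continuous
    rapidlyDecreasing_gaussianBump.superpolynomialDecay b).mono_set Ioi_subset_Ici_self

theorem integral_Ioi_gaussianBump_center :
    ∫ u in Ioi a, gaussianBump a u = √(2 * Real.pi) / 4 := by
  have htranslate := (measurePreserving_sub_right volume a).setIntegral_preimage_emb
    (MeasurableEquiv.subRight a).measurableEmbedding (gaussianBump 0) (Ioi 0)
  have hhalf : ∫ u in Ioi (0 : ℝ), Real.exp (-(u ^ 2 / 2)) = √(2 * Real.pi) / 2 := by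
    convert integral_gaussian_Ioi (1 / 2) using 4 <;> ring
  simp only [gaussianBump, sub_zero, preimage_sub_const_Ioi, zero_add, integral_const_mul, hhalf]
    at htranslate ⊢
  rw [htranslate]
  ring

theorem one_half_lt_integral_gaussianBump (ha : 0 ≤ a) :
    1 / 2 < ∫ u in Ioi 0, gaussianBump a u :=
  calc (1 / 2 : ℝ) < √(2 * Real.pi) / 4 := by
        have : 2 < √(2 * Real.pi) := Real.lt_sqrt_of_sq_lt (by linarith [Real.pi_gt_three])
        linarith
    _ = ∫ u in Ioi a, gaussianBump a u := integral_Ioi_gaussianBump_center.symm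
    _ ≤ ∫ u in Ioi 0, gaussianBump a u :=
        setIntegral_mono_set (integrableOn_gaussianBump 0)
          (Eventually.of_forall fun u => (gaussianBump_pos u).le)
          (Ioi_subset_Ioi ha).eventuallyLE

theorem hasPV_deriv_gaussianBump :
    HasPV (deriv (gaussianBump a)) a (∫ u in Ioi 0, gaussianBump a u) :=
  hasPV_of_eq_sub_mul (integrableOn_gaussianBump 0) deriv_gaussianBump

theorem IsShearProfile.instability_criterion_gaussianBump {V : ℝ → ℝ}
    (hV : IsShearProfile (gaussianBump a) V) (ha : 2 ≤ a) :
    0 < -1 / deriv V 0 + a * ∫ u in Ioi 0, gaussianBump a u := by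
  have hwall : -1 / deriv V 0 = gaussianBump a 0 - 1 := by
    rw [hV.deriv_eq, hV.zero, div_inv_eq_mul]; ring
  rw [hwall]
  nlinarith [gaussianBump_pos (a := a) 0, one_half_lt_integral_gaussianBump (a := a) (by linarith)]

end GaussianBump

/-- there is an admissible shear profile `V_s` whose associated function
`g` is strictly monotone near each of its positive zeroes and satisfies `n₊ - n₋ ≠ 0`. -/
theorem exists_unstable_shear_flow :
    ∃ (Vs : ℝ → ℝ) (As : ℝ),
      ContDiff ℝ (⊤ : ℕ∞) Vs ∧ Vs 0 = 0 ∧ (∀ z : ℝ, 0 ≤ z → 0 < deriv Vs z) ∧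
      (∀ p : ℕ, Tendsto (fun z : ℝ => z ^ p * (Vs z - z - As)) atTop (nhds 0)) ∧
      (∀ n : ℕ, 1 ≤ n → ∀ p : ℕ,
        Tendsto (fun z : ℝ => z ^ p * iteratedDeriv n (fun w => Vs w - w) z)
          atTop (nhds 0)) ∧
      ∃ g : ℝ → ℝ,
        (∀ z : ℝ, 0 ≤ z → g (Vs z) = deriv (deriv Vs) z / (deriv Vs z) ^ 3) ∧
        (∀ a : ℝ, 0 < a → g a = 0 → ∃ ε > (0 : ℝ),
          StrictMonoOn g (Set.Ioo (a - ε) (a + ε))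
            ∨ StrictAntiOn g (Set.Ioo (a - ε) (a + ε))) ∧
        (Splus Vs g).Finite ∧ (Sminus Vs g).Finite ∧
        (Splus Vs g).ncard ≠ (Sminus Vs g).ncard := by
  obtain ⟨V, hV⟩ := exists_isShearProfile (ρ := gaussianBump 2)
    rapidlyDecreasing_gaussianBump.contDiff.continuous gaussianBump_le_half one_half_lt_one
  have hρ : RapidlyDecreasing (gaussianBump 2) := rapidlyDecreasing_gaussianBump
  have hρ_ge (u : ℝ) : 0 ≤ gaussianBump 2 u := (gaussianBump_pos u).le
  have hρ_lt (u : ℝ) : gaussianBump 2 u < 1 := (gaussianBump_le_half u).trans_lt one_half_lt_one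
  obtain ⟨A, hA⟩ := hV.exists_superpolynomialDecay_sub_id_sub_const hρ_ge gaussianBump_le_half
    one_half_lt_one hρ
  have hzero (u : ℝ) (_ : 0 < u) (hu : deriv (gaussianBump 2) u = 0) : u = 2 :=
    deriv_gaussianBump_eq_zero_iff.1 hu
  have hSplus : Splus V (deriv (gaussianBump 2)) = ∅ :=
    Splus_eq_empty hzero one_pos strictAntiOn_deriv_gaussianBump
  have hSminus : Sminus V (deriv (gaussianBump 2)) = {2} :=
    Sminus_eq_singleton two_pos (deriv_gaussianBump_eq_zero_iff.2 rfl) hzero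
      hasPV_deriv_gaussianBump (hV.instability_criterion_gaussianBump le_rfl) one_pos
      strictAntiOn_deriv_gaussianBump
  refine ⟨V, A, hV.contDiff hρ_lt hρ.contDiff, hV.zero, fun z _ => hV.deriv_pos hρ_lt z, hA,
    fun n hn => hV.superpolynomialDecay_iteratedDeriv_sub_id hρ_ge gaussianBump_le_half
      one_half_lt_one hρ hn,
    deriv (gaussianBump 2),
    fun z _ => hV.deriv_defect_comp hρ_lt (hρ.hasDerivAt _).differentiableAt,
    fun u hu hgu => ⟨1, one_pos, .inr (hzero u hu hgu ▸ strictAntiOn_deriv_gaussianBump)⟩, ?_⟩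
  simp [hSplus, hSminus]
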